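/- Let 𝒦₁, 𝒦₂ be simplicial complexes over S with 𝒦₁ ≠ 𝒦₂, and let sd(𝒦ᵢ) denote their barycentric subdivisions, which are simplicial complexes whose vertex set is contained in the collection of faces of 𝒦ᵢ. Then d(sd(𝒦₁), sd(𝒦₂)) = 1. -/

import Mathlib

open scoped BigOperators

/-- A simplicial complex over the vertex set `S`: a nonempty collection of
nonempty finite subsets of `S`, closed under taking nonempty subsets. -/
def IsSimplicialComplex {S : Type*} (K : Set (Finset S)) : Prop :=
  K.Nonempty ∧ (∀ F ∈ K, F.Nonempty) ∧
    ∀ F ∈ K, ∀ G : Finset S, G.Nonempty → G ⊆ F → G ∈ K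

/-- Halved ℓ¹ distance between finitely supported real functions:
`d(α,β) = (1/2) ∑ₛ |α s - β s|`. -/
noncomputable def l1dist {S : Type*} (α β : S →₀ ℝ) : ℝ :=
  (1 / 2) * (α - β).sum fun _ x => |x|

/-- The ℓ¹ geometric realization of a collection `K` of finite subsets of `S`:
finitely supported probability vectors whose support is a face of `K`. -/
def realization {S : Type*} (K : Set (Finset S)) : Set (S →₀ ℝ) :=
  {α | (∀ s, 0 ≤ α s) ∧ (α.sum fun _ x => x) = 1 ∧ α.support ∈ K}

/-- Distance from a point to a set of finitely supported functions. -/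
noncomputable def distToSet {S : Type*} (α : S →₀ ℝ) (X : Set (S →₀ ℝ)) : ℝ :=
  sInf (l1dist α '' X)

/-- One-sided Hausdorff distance between (the realizations of) two complexes. -/
noncomputable def hdelta {S : Type*} (K₁ K₂ : Set (Finset S)) : ℝ :=
  sSup ((fun α => distToSet α (realization K₂)) '' realization K₁)

/-- Hausdorff distance between (the realizations of) two simplicial complexes. -/
noncomputable def hdist {S : Type*} (K₁ K₂ : Set (Finset S)) : ℝ :=
  max (hdelta K₁ K₂) (hdelta K₂ K₁)

/-- `d(F, K)`: supremum of distances to `|K|₁` over probability vectors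
supported exactly on `F`. -/
noncomputable def dFace {S : Type*} (F : Finset S) (K : Set (Finset S)) : ℝ :=
  sSup ((fun α => distToSet α (realization K)) ''
    {α : S →₀ ℝ | (∀ s, 0 ≤ α s) ∧ (α.sum fun _ x => x) = 1 ∧ α.support = F})

/-- The `n`-skeleton of a simplicial complex. -/
def skeleton {S : Type*} (n : ℕ) (K : Set (Finset S)) : Set (Finset S) :=
  {F | F ∈ K ∧ F.card ≤ n + 1}

/-- The barycentric subdivision of a simplicial complex `K` over `S`: its
vertices are the faces of `K` and its faces are the nonempty finite chains of
faces of `K`. -/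
def sd {S : Type*} (K : Set (Finset S)) : Set (Finset (Finset S)) :=
  {X | X.Nonempty ∧ (∀ x ∈ X, x ∈ K) ∧ IsChain (· ⊆ ·) (X : Set (Finset S))}

theorem l1dist_eq_aux {S : Type*} [DecidableEq S] (α β : S →₀ ℝ) :
    l1dist α β = (1 / 2) * ∑ s ∈ α.support ∪ β.support, |α s - β s| := by
  unfold l1dist
  rw [Finsupp.sum_of_support_subset (α - β) (s := α.support ∪ β.support)]
  · simp
  · intro s hs
    by_contra hc
    simp only [Finset.mem_union, Finsupp.mem_support_iff, not_or, not_not] at hc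
    simp [hc.1, hc.2] at hs
  · simp

theorem sum_left_aux {S : Type*} [DecidableEq S] (α : S →₀ ℝ) (T : Finset S)
    (h : α.support ⊆ T) : ∑ s ∈ T, α s = α.sum fun _ x => x := by
  rw [Finsupp.sum_of_support_subset α h]
  simp

theorem l1dist_nonneg_aux {S : Type*} (α β : S →₀ ℝ) : 0 ≤ l1dist α β := by
  classical
  rw [l1dist_eq_aux]
  positivity

theorem l1dist_le_one_aux {S : Type*} {K L : Set (Finset S)} {α β : S →₀ ℝ}
    (ha : α ∈ realization K) (hb : β ∈ realization L) : l1dist α β ≤ 1 := by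
  classical
  rw [l1dist_eq_aux]
  have h : ∑ s ∈ α.support ∪ β.support, |α s - β s|
      ≤ ∑ s ∈ α.support ∪ β.support, (α s + β s) := by
    apply Finset.sum_le_sum
    intro s _
    have h1 := ha.1 s
    have h2 := hb.1 s
    rw [abs_le]
    constructor <;> linarith
  rw [Finset.sum_add_distrib, sum_left_aux α _ Finset.subset_union_left,
    sum_left_aux β _ Finset.subset_union_right, ha.2.1, hb.2.1] at h
  linarith

theorem l1dist_single_aux {S : Type*} {L : Set (Finset S)} {F : S} {β : S →₀ ℝ}
    (hb : β ∈ realization L) (hF : β F = 0) : l1dist (Finsupp.single F 1) β = 1 := by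
  classical
  rw [l1dist_eq_aux]
  have h : ∑ s ∈ (Finsupp.single F (1 : ℝ)).support ∪ β.support, |Finsupp.single F (1 : ℝ) s - β s|
      = ∑ s ∈ (Finsupp.single F (1 : ℝ)).support ∪ β.support, (Finsupp.single F (1 : ℝ) s + β s) := by
    apply Finset.sum_congr rfl
    intro s _
    by_cases hs : s = F
    · subst hs
      simp [hF]
    · have h2 := hb.1 s
      simp [hs, abs_of_nonneg h2]
  rw [h, Finset.sum_add_distrib, sum_left_aux _ _ Finset.subset_union_left,
    sum_left_aux β _ Finset.subset_union_right, hb.2.1]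
  simp
  norm_num

theorem single_mem_aux {S : Type*} {K : Set (Finset S)} {F : Finset S} (hF : F ∈ K) :
    Finsupp.single F (1 : ℝ) ∈ realization (sd K) := by
  classical
  refine ⟨fun s => ?_, by simp, ?_⟩
  · rw [Finsupp.single_apply]
    split_ifs <;> norm_num
  · rw [Finsupp.support_single_ne_zero F one_ne_zero]
    exact ⟨by simp, by simpa using hF, by simp⟩

theorem distToSet_le_aux {S : Type*} {K L : Set (Finset S)} {α : Finset S →₀ ℝ}
    (hL : L.Nonempty) (ha : α ∈ realization (sd K)) :
    distToSet α (realization (sd L)) ≤ 1 := by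
  obtain ⟨G, hG⟩ := hL
  refine (csInf_le ?_ (Set.mem_image_of_mem _ (single_mem_aux hG))).trans
    (l1dist_le_one_aux ha (single_mem_aux hG))
  refine ⟨0, ?_⟩
  rintro _ ⟨β, _, rfl⟩
  exact l1dist_nonneg_aux _ _

theorem hdelta_le_aux {S : Type*} {K L : Set (Finset S)}
    (hK : K.Nonempty) (hL : L.Nonempty) : hdelta (sd K) (sd L) ≤ 1 := by
  obtain ⟨F, hF⟩ := hK
  refine csSup_le (Set.Nonempty.image _ ⟨_, single_mem_aux hF⟩) ?_
  rintro _ ⟨α, ha, rfl⟩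
  exact distToSet_le_aux hL ha

theorem le_hdelta_aux {S : Type*} {K L : Set (Finset S)} {F : Finset S}
    (hL : L.Nonempty) (hF : F ∈ K) (hF' : F ∉ L) : 1 ≤ hdelta (sd K) (sd L) := by
  have h : (1 : ℝ) ≤ distToSet (Finsupp.single F 1) (realization (sd L)) := by
    obtain ⟨G, hG⟩ := hL
    refine le_csInf (Set.Nonempty.image _ ⟨_, single_mem_aux hG⟩) ?_
    rintro _ ⟨β, hb, rfl⟩
    refine (l1dist_single_aux hb ?_).ge
    by_contra hc
    exact hF' (hb.2.2.2.1 F (Finsupp.mem_support_iff.2 hc))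
  refine h.trans (le_csSup ⟨1, ?_⟩ ⟨_, single_mem_aux hF, rfl⟩)
  rintro _ ⟨α, ha, rfl⟩
  exact distToSet_le_aux hL ha

/-- Barycentric subdivisions of distinct simplicial complexes are at Hausdorff
distance `1`. -/
theorem stmt19 {S : Type*} (K₁ K₂ : Set (Finset S))
    (h1 : IsSimplicialComplex K₁) (h2 : IsSimplicialComplex K₂)
    (hne : K₁ ≠ K₂) :
    hdist (sd K₁) (sd K₂) = 1 := by
  apply le_antisymm
  · exact max_le (hdelta_le_aux h1.1 h2.1) (hdelta_le_aux h2.1 h1.1)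
  · by_cases h : K₁ ⊆ K₂
    · have h' : ¬ K₂ ⊆ K₁ := fun h' => hne (h.antisymm h')
      obtain ⟨F, hF, hF'⟩ := Set.not_subset.1 h'
      exact (le_hdelta_aux h1.1 hF hF').trans (le_max_right _ _)
    · obtain ⟨F, hF, hF'⟩ := Set.not_subset.1 h
      exact (le_hdelta_aux h2.1 hF hF').trans (le_max_left _ _)
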